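/- Let n ≥ k ≥ 2 be integers, let λ ∈ (0,1], and let s be a λ-dispersed preference model on n items. Let A ⊆ {1,…,n} be a subset with |A| ≥ k and λ ≥ k²/|A|. Then the uniform distribution on A (the vector assigning mass 1/|A| to each item of A and 0 to all other items) lies in IRD(v) for every v ∈ Δ(n), and hence lies in EIRD. Equivalently, if λ ≥ Ck²/n for some C ≥ 1, then EIRD contains the uniform distribution over any subset of at least n/C items. -/

import Mathlib

open Finset

/-- The choice distribution induced by preference model `s` at memory vector `v`
when menu `K` is shown. -/
noncomputable def menuDist {n : ℕ} (s : (Fin n → ℝ) → Fin n → ℝ)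
    (v : Fin n → ℝ) (K : Finset (Fin n)) : Fin n → ℝ :=
  fun i => if i ∈ K then s v i / ∑ j ∈ K, s v j else 0

/-- The set of instantaneously realizable distributions at memory vector `v`. -/
noncomputable def IRD {n : ℕ} (k : ℕ) (s : (Fin n → ℝ) → Fin n → ℝ)
    (v : Fin n → ℝ) : Set (Fin n → ℝ) :=
  convexHull ℝ { p | ∃ K : Finset (Fin n), K.card = k ∧ p = menuDist s v K }

/-!
A distribution `p` is realizable once the vector `x i ∝ p i / s i` of total mass `k` has all its
coordinates in `[0, 1]`: then `x` is a convex combination of indicators of `k`-element menus, and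
the projective map `x ↦ (s * x) / ⟨s, x⟩`, which sends the indicator of a menu to its choice
distribution, preserves convex combinations up to reweighting and sends `x` to `p`.
For `p` uniform on `A` the coordinate bound reads `k / s i ≤ ∑ j ∈ A, 1 / s j`; since scores lie in
`[λ, 1]`, it follows from `(k - 1) / λ ≤ |A| - 1`.
-/

section Convexity

open Matrix

lemma convex_perspective_preimage {𝕜 E F : Type*} [Field 𝕜] [LinearOrder 𝕜]
    [IsStrictOrderedRing 𝕜] [AddCommGroup E] [Module 𝕜 E] [AddCommGroup F] [Module 𝕜 F]
    {C : Set F} (hC : Convex 𝕜 C) (g : E →ₗ[𝕜] 𝕜) (L : E →ₗ[𝕜] F) :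
    Convex 𝕜 {x | 0 < g x ∧ (g x)⁻¹ • L x ∈ C} := by
  rintro x ⟨hgx, hx⟩ y ⟨hgy, hy⟩ a b ha hb hab
  have hg : g (a • x + b • y) = a * g x + b * g y := by simp
  have hpos : 0 < a * g x + b * g y := by
    simpa using convex_Ioi (0 : 𝕜) hgx hgy ha hb hab
  refine ⟨hg ▸ hpos, ?_⟩
  convert convex_iff_div.1 hC hx hy (mul_nonneg ha hgx.le) (mul_nonneg hb hgy.le) hpos using 1
  simp only [hg, map_add, map_smul]
  match_scalars <;> field_simp

variable {ι : Type*} [Fintype ι]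

lemma dotProduct_indicator_one (w : ι → ℝ) (K : Finset ι) :
    w ⬝ᵥ Set.indicator ↑K 1 = ∑ i ∈ K, w i := by
  classical
  simp [dotProduct, Set.indicator_apply]

lemma mem_convexHull_of_forall_dotProduct_le {t : Set (ι → ℝ)} (ht : t.Finite) {x : ι → ℝ}
    (h : ∀ c : ι → ℝ, ∃ y ∈ t, c ⬝ᵥ x ≤ c ⬝ᵥ y) : x ∈ convexHull ℝ t := by
  classical
  by_contra hx
  obtain ⟨f, u, hf, hu⟩ := geometric_hahn_banach_closed_point (convex_convexHull ℝ t)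
    (ht.isClosed_convexHull ℝ) hx
  obtain ⟨c, hc⟩ := (dotProductEquiv ℝ ι).surjective f.toLinearMap
  have hfc : ∀ y, f y = c ⬝ᵥ y := fun y => (LinearMap.congr_fun hc y).symm
  obtain ⟨y, hy, hxy⟩ := h c
  rw [← hfc, ← hfc] at hxy
  exact (hxy.trans_lt (hf y (subset_convexHull ℝ t hy))).not_gt hu

lemma exists_card_eq_threshold {α : Type*} [LinearOrder α] [Nonempty α] (c : ι → α) {k : ℕ}
    (hk : k ≤ Fintype.card ι) :
    ∃ K : Finset ι, #K = k ∧ ∃ t, (∀ i ∈ K, t ≤ c i) ∧ ∀ i ∉ K, c i ≤ t := by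
  classical
  induction k with
  | zero =>
    obtain ⟨t, ht⟩ := (Set.finite_range c).bddAbove
    exact ⟨∅, card_empty, t, by simp, fun i _ => ht ⟨i, rfl⟩⟩
  | succ k ih =>
    obtain ⟨K, hK, t, hle, hge⟩ := ih (by omega)
    have hne : Kᶜ.Nonempty := by rw [← card_pos, card_compl]; omega
    obtain ⟨j, hj, hmax⟩ := exists_max_image Kᶜ c hne
    rw [mem_compl] at hj
    refine ⟨insert j K, by rw [card_insert_of_notMem hj, hK], c j, ?_, fun i hi => ?_⟩
    · simpa using fun i hi => (hge j hj).trans (hle i hi)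
    · exact hmax i (by simp_all)

/-- The hypersimplex: the slice `∑ i, x i = k` of the unit cube. Its vertices are the indicators of
the `k`-element subsets, so it parametrizes the mixtures of menus of size `k`. -/
def hypersimplex (ι : Type*) [Fintype ι] (k : ℕ) : Set (ι → ℝ) :=
  {x | (∀ i, x i ∈ Set.Icc 0 1) ∧ ∑ i, x i = k}

lemma le_card_of_mem_hypersimplex {k : ℕ} {x : ι → ℝ} (hx : x ∈ hypersimplex ι k) :
    k ≤ Fintype.card ι := by
  have : (k : ℝ) ≤ Fintype.card ι := by
    simpa [hx.2] using sum_le_card_nsmul univ x 1 fun i _ => (hx.1 i).2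
  exact_mod_cast this

lemma exists_dotProduct_le_dotProduct_indicator {k : ℕ} {x : ι → ℝ} (hx : x ∈ hypersimplex ι k)
    (c : ι → ℝ) :
    ∃ K : Finset ι, #K = k ∧ c ⬝ᵥ x ≤ c ⬝ᵥ Set.indicator ↑K 1 := by
  classical
  obtain ⟨K, hK, t, hle, hge⟩ := exists_card_eq_threshold c (le_card_of_mem_hypersimplex hx)
  refine ⟨K, hK, ?_⟩
  -- As both vectors have mass `k`, `c` may be shifted by `t`; the bound then holds coordinatewise.
  have hterm : ∀ i, (c i - t) * x i ≤ (c i - t) * Set.indicator (K : Set ι) 1 i := fun i => by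
    by_cases hi : i ∈ K
    · simpa [hi] using mul_le_of_le_one_right (sub_nonneg.2 (hle i hi)) (hx.1 i).2
    · simpa [hi] using mul_nonpos_of_nonpos_of_nonneg (sub_nonpos.2 (hge i hi)) (hx.1 i).1
  have hmass : ∑ i, Set.indicator (K : Set ι) (1 : ι → ℝ) i = ∑ i, x i := by
    simp [Set.indicator_apply, hK, hx.2]
  have hsum := sum_le_sum fun i (_ : i ∈ univ) => hterm i
  simp only [sub_mul, sum_sub_distrib, ← mul_sum, hmass] at hsum
  simpa [dotProduct] using hsum

lemma hypersimplex_subset_convexHull (k : ℕ) :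
    hypersimplex ι k ⊆ convexHull ℝ {x | ∃ K : Finset ι, #K = k ∧ x = Set.indicator ↑K 1} := by
  intro x hx
  refine mem_convexHull_of_forall_dotProduct_le ?_ fun c => ?_
  · exact (Set.finite_range fun K : Finset ι => Set.indicator (K : Set ι) (1 : ι → ℝ)).subset
      fun x ⟨K, _, hK⟩ => ⟨K, hK.symm⟩
  · obtain ⟨K, hK, hle⟩ := exists_dotProduct_le_dotProduct_indicator hx c
    exact ⟨_, ⟨K, hK, rfl⟩, hle⟩

end Convexity

section Realizability

open Matrix

variable {n k : ℕ} {s : (Fin n → ℝ) → Fin n → ℝ} {v : Fin n → ℝ}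

lemma menuDist_eq_smul_mul_indicator (s : (Fin n → ℝ) → Fin n → ℝ) (v : Fin n → ℝ)
    (K : Finset (Fin n)) :
    menuDist s v K = (s v ⬝ᵥ Set.indicator ↑K 1)⁻¹ • (s v * Set.indicator ↑K 1) := by
  ext i
  by_cases hi : i ∈ K <;> simp [menuDist, dotProduct_indicator_one, hi, div_eq_inv_mul]

lemma smul_mul_mem_IRD (hk : 0 < k) (hs : ∀ i, 0 < s v i) {x : Fin n → ℝ}
    (hx : x ∈ hypersimplex (Fin n) k) : (s v ⬝ᵥ x)⁻¹ • (s v * x) ∈ IRD k s v := by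
  have hconv := convex_perspective_preimage (convex_convexHull ℝ _ : Convex ℝ (IRD k s v))
    (dotProductEquiv ℝ (Fin n) (s v)) (LinearMap.mulLeft ℝ (s v))
  refine (convexHull_min ?_ hconv (hypersimplex_subset_convexHull k hx)).2
  rintro _ ⟨K, hK, rfl⟩
  refine ⟨?_, ?_⟩
  · simpa [dotProduct_indicator_one] using
      sum_pos (fun i _ => hs i) (card_pos.1 (hK ▸ hk))
  · exact subset_convexHull ℝ _ ⟨K, hK, (menuDist_eq_smul_mul_indicator s v K).symm⟩

lemma mem_IRD_of_mul_div_le_sum_div (hk : 0 < k) (hs : ∀ i, 0 < s v i) {p : Fin n → ℝ}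
    (hp : p ∈ stdSimplex ℝ (Fin n)) (hpk : ∀ i, k * (p i / s v i) ≤ ∑ j, p j / s v j) :
    p ∈ IRD k s v := by
  have hnonneg : ∀ i, 0 ≤ p i / s v i := fun i => div_nonneg (hp.1 i) (hs i).le
  set W := ∑ j, p j / s v j
  have hW : 0 < W := by
    obtain ⟨i, -, hi⟩ := exists_ne_zero_of_sum_ne_zero (hp.2 ▸ one_ne_zero : ∑ i, p i ≠ 0)
    exact sum_pos' (fun i _ => hnonneg i)
      ⟨i, mem_univ i, div_pos ((hp.1 i).lt_of_ne' hi) (hs i)⟩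
  set x : Fin n → ℝ := (k / W) • (p / s v)
  have hx : x ∈ hypersimplex (Fin n) k := by
    refine ⟨fun i => ⟨mul_nonneg (by positivity) (hnonneg i), ?_⟩, ?_⟩
    · simpa [x, div_mul_eq_mul_div, div_le_one hW] using hpk i
    · simp only [x, Pi.smul_apply, Pi.div_apply, smul_eq_mul, ← mul_sum]
      exact div_mul_cancel₀ _ hW.ne'
  have hmul : s v * x = (k / W) • p := by
    ext i
    have := (hs i).ne'
    simp only [x, Pi.mul_apply, Pi.smul_apply, Pi.div_apply, smul_eq_mul]
    field_simp
  have hdot : s v ⬝ᵥ x = k / W := by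
    change ∑ i, (s v * x) i = k / W
    simp only [hmul, Pi.smul_apply, smul_eq_mul, ← mul_sum, hp.2, mul_one]
  have hmem := smul_mul_mem_IRD hk hs hx
  rwa [hmul, hdot, inv_smul_smul₀ (by positivity)] at hmem

end Realizability

section UniformTarget

variable {𝕜 : Type*} [Field 𝕜] [LinearOrder 𝕜] [IsStrictOrderedRing 𝕜]

lemma uniform_mem_stdSimplex {ι : Type*} [Fintype ι] [DecidableEq ι] {A : Finset ι}
    (hA : A.Nonempty) : (fun i => if i ∈ A then 1 / (#A : 𝕜) else 0) ∈ stdSimplex 𝕜 ι :=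
  ⟨fun i => by positivity, by simp [hA.card_ne_zero]⟩

/- The extreme case, where the condition on `r` comes from, is `w i = lam` with all other weights
equal to `1`. -/
lemma mul_inv_le_sum_inv {ι : Type*} {A : Finset ι} {w : ι → 𝕜} {lam r : 𝕜} (hlam : 0 < lam)
    (hw : ∀ i ∈ A, lam ≤ w i ∧ w i ≤ 1) (hr : r - 1 ≤ lam * (#A - 1)) {i : ι} (hi : i ∈ A) :
    r * (w i)⁻¹ ≤ ∑ j ∈ A, (w j)⁻¹ := by
  classical
  have hpos : ∀ j ∈ A, 0 < w j := fun j hj => hlam.trans_le (hw j hj).1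
  have hcard : (#(A.erase i) : 𝕜) = #A - 1 := cast_card_erase_of_mem hi
  have hself : (r - 1) * (w i)⁻¹ ≤ #(A.erase i) := by
    rw [← div_eq_mul_inv, div_le_iff₀' (hpos i hi)]
    refine (hcard ▸ hr).trans ?_
    gcongr
    exact (hw i hi).1
  have hrest : (#(A.erase i) : 𝕜) ≤ ∑ j ∈ A.erase i, (w j)⁻¹ := by
    simpa using card_nsmul_le_sum (A.erase i) (fun j => (w j)⁻¹) 1 fun j hj =>
      (one_le_inv₀ (hpos j (mem_of_mem_erase hj))).2 (hw j (mem_of_mem_erase hj)).2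
  rw [← add_sum_erase A (fun j => (w j)⁻¹) hi]
  linarith

lemma sub_one_le_mul_sub_one_of_sq_div_le {k a lam : 𝕜} (hk : 1 ≤ k) (ha : 0 < a) (hlam : lam ≤ 1)
    (h : k ^ 2 / a ≤ lam) : k - 1 ≤ lam * (a - 1) := by
  rw [div_le_iff₀ ha] at h
  calc k - 1 ≤ k ^ 2 - 1 := by gcongr; exact le_self_pow₀ hk two_ne_zero
    _ ≤ lam * a - lam := sub_le_sub h hlam
    _ = lam * (a - 1) := by ring

end UniformTarget

theorem subset_uniform_mem_IRD_general {n k : ℕ} (hk : 0 < k) {lam : ℝ} (hlam : 0 < lam)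
    {s : (Fin n → ℝ) → Fin n → ℝ} {v : Fin n → ℝ} (hs : ∀ i, lam ≤ s v i ∧ s v i ≤ 1)
    {A : Finset (Fin n)} (hA : (k : ℝ) - 1 ≤ lam * (#A - 1)) :
    (fun i : Fin n => if i ∈ A then 1 / (#A : ℝ) else 0) ∈ IRD k s v := by
  have hpos : ∀ i, 0 < s v i := fun i => hlam.trans_le (hs i).1
  have hne : A.Nonempty := by
    by_contra! hempty
    have hk1 : (1 : ℝ) ≤ k := by exact_mod_cast hk
    simp only [hempty, card_empty, Nat.cast_zero] at hA
    linarith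
  have hunif := uniform_mem_stdSimplex (𝕜 := ℝ) hne
  refine mem_IRD_of_mul_div_le_sum_div hk hpos hunif fun i => ?_
  by_cases hi : i ∈ A
  · have hinv := mul_inv_le_sum_inv hlam (fun j _ => hs j) hA hi
    calc (k : ℝ) * ((if i ∈ A then 1 / (#A : ℝ) else 0) / s v i)
        = 1 / #A * (k * (s v i)⁻¹) := by rw [if_pos hi]; ring
      _ ≤ 1 / #A * ∑ j ∈ A, (s v j)⁻¹ := by gcongr
      _ = ∑ j, (if j ∈ A then 1 / (#A : ℝ) else 0) / s v j := by
        simp [mul_sum, div_eq_mul_inv]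
  · simpa [hi] using sum_nonneg fun j (_ : j ∈ univ) => div_nonneg (hunif.1 j) (hpos j).le

/-- For a `λ`-dispersed preference model and a subset `A` of items with `|A| ≥ k` and
`λ ≥ k²/|A|`, the uniform distribution over `A` lies in `IRD(v)` for every memory vector
`v`, and hence in `EIRD`. -/
theorem subset_uniform_mem_IRD {n k : ℕ} (hk : 2 ≤ k) (hkn : k ≤ n)
    (lam : ℝ) (hlam0 : 0 < lam) (hlam1 : lam ≤ 1)
    (s : (Fin n → ℝ) → Fin n → ℝ)
    (hdisp : ∀ v ∈ stdSimplex ℝ (Fin n), ∀ i, lam ≤ s v i ∧ s v i ≤ 1)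
    (A : Finset (Fin n)) (hA : k ≤ A.card)
    (hlamA : (k : ℝ) ^ 2 / A.card ≤ lam) :
    ∀ v ∈ stdSimplex ℝ (Fin n),
      (fun i : Fin n => if i ∈ A then 1 / (A.card : ℝ) else 0) ∈ IRD k s v := by
  have hk1 : (1 : ℝ) ≤ k := by exact_mod_cast one_le_two.trans hk
  have hA0 : (0 : ℝ) < #A := by exact_mod_cast two_pos.trans_le (hk.trans hA)
  exact fun v hv => subset_uniform_mem_IRD_general (two_pos.trans_le hk) hlam0 (hdisp v hv)
    (sub_one_le_mul_sub_one_of_sq_div_le hk1 hA0 hlam1 hlamA)
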